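/- Persistent-ordering event is unlikely given a moderate initial imbalance (Lemma 6): Fix integers 1 ≤ t₁ < t₂ and consider the balls-into-bins process under any policy whose flexing decisions ω(t) for t ≤ t₁ are measurable functions of (θ_1,…,θ_{t−1}) and which sets ω(t) = 1 for all t₁ < t ≤ t₂; flexed flex balls are placed in the bin of their flex set with the smallest current load (ties broken in favor of the smallest index). Fix distinct i, j ∈ {1,…,N} and constants a_p ∈ (0, 1/(5·binom(N,2))] and a > 0, and let E = {x_i(t₁) − x_j(t₁) ≤ a_p·(t₂−t₁)·q + a}. Let F_{ij}^1 be the event that bin i attains the maximum load and bin j the minimum load at time t₂ and x_i(t) ≠ x_j(t) for all t ∈ {t₁,…,t₂}. Then there exist constants α₀, α₁ > 0 and t₀ ∈ ℕ, depending only on N, q, a_p and a, such that whenever t₂ − t₁ ≥ t₀: P(F_{ij}^1 ∩ E) ≤ (4·exp(−α₀·(t₂−t₁)) + exp(−α₁·(t₂−t₁)))·P(E). -/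

import Mathlib

/-!
If bins `i` and `j` have different loads throughout `[t₁, t₂]` and `i` is at least as loaded as
`j` at time `t₂`, then `x_j < x_i` on all of `[t₁, t₂]`, since a single ball moves the difference
`D = x_i - x_j` by at most one (`ordered_of_ne`).

While `x_j < x_i` and every flex ball is flexed, `D` has drift at most `-d`, where
`d = q / C(N,2)`. Balls sent to their preferred bin contribute nothing. Among flex sets,
exchanging `i` and `j` turns each set that feeds `i` into one that feeds `j`, and `{i, j}` feeds
`j` in addition (`card_argmin_lt`, `drift_le`). Hence `exp (d D / 2)` contracts in mean by the
factor `1 - d²/4 ≤ exp (-d²/4)` per step as long as the order persists (`one_step_exp`,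
`orderedWeight_step`).

On the event `E` the initial value of this exponential is at most
`exp ((d/2) (a_p L q + a)) ≤ exp (d² L / 10 + d a / 2)`, with `L = t₂ - t₁`, because
`a_p q ≤ d / 5`. After `L` steps the order persists with probability at most
`exp (-(d²/4 - d²/10) L + d a / 2) P(E)`, which is below `exp (-d² L / 10) P(E)` for large `L`.
-/

attribute [local instance] Classical.propDecidable

/-- An arrival type: (is-flex-ball, preferred bin, flex set). -/
abbrev Arrival (N : ℕ) := Bool × Fin N × Finset (Fin N)

/-- Mass of a single arrival: `f ~ Bernoulli(q)`, `p` uniform on `Fin N`,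
`F` uniform on the 2-element subsets of `Fin N`, mutually independent. -/
noncomputable def arrivalProb (N : ℕ) (q : ℝ) (a : Arrival N) : ℝ :=
  (if a.1 then q else 1 - q) * (1 / (N : ℝ)) *
    (if a.2.2.card = 2 then 1 / (N.choose 2 : ℝ) else 0)

/-- Mass of a sequence of `T` i.i.d. arrivals. -/
noncomputable def seqMass (N T : ℕ) (q : ℝ) (xs : Fin T → Arrival N) : ℝ :=
  ∏ t, arrivalProb N q (xs t)

/-- Expectation of a real random variable on the canonical space of `T` arrivals. -/
noncomputable def expec (N T : ℕ) (q : ℝ) (X : (Fin T → Arrival N) → ℝ) : ℝ :=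
  ∑ xs : Fin T → Arrival N, seqMass N T q xs * X xs

/-- Probability of an event on the canonical space of `T` arrivals. -/
noncomputable def prob (N T : ℕ) (q : ℝ) (A : (Fin T → Arrival N) → Prop) : ℝ :=
  ∑ xs : Fin T → Arrival N, if A xs then seqMass N T q xs else 0

/-- The least-loaded bin in `F` (ties broken in favor of the smallest index). -/
noncomputable def argminBin {N : ℕ} [NeZero N] (x : Fin N → ℕ) (F : Finset (Fin N)) : Fin N :=
  if hF : (F.filter fun i => ∀ j ∈ F, x i ≤ x j).Nonempty
  then (F.filter fun i => ∀ j ∈ F, x i ≤ x j).min' hF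
  else 0

/-- One step of the greedy (least-loaded) allocation: if the ball is a flex ball and
flexing is exerted, it goes to the least-loaded bin of its flex set (lexicographic
tie-breaking); otherwise it goes to its preferred bin. -/
noncomputable def greedyStep {N : ℕ} [NeZero N] (flex : Bool) (a : Arrival N)
    (x : Fin N → ℕ) : Fin N → ℕ :=
  fun i => if i = (if a.1 && flex then argminBin x a.2.2 else a.2.1) then x i + 1 else x i

/-- Load process under a flexing rule `dec` (which may depend on the whole realization,
the time, and the current loads), with greedy placement of flexed flex balls. -/
noncomputable def greedyLoads {N T : ℕ} [NeZero N]
    (dec : (Fin T → Arrival N) → ℕ → (Fin N → ℕ) → Bool)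
    (xs : Fin T → Arrival N) : ℕ → Fin N → ℕ
  | 0 => fun _ => 0
  | t + 1 =>
    if h : t < T then
      greedyStep (dec xs t (greedyLoads dec xs t)) (xs ⟨t, h⟩) (greedyLoads dec xs t)
    else greedyLoads dec xs t

/-- The maximum load over all bins. -/
noncomputable def maxLoad {N : ℕ} (x : Fin N → ℕ) : ℕ := Finset.univ.sup x

/-- `Gap(t)` : maximum load minus the average load `t/N`. -/
noncomputable def gap {N : ℕ} (x : Fin N → ℕ) (t : ℕ) : ℝ :=
  (maxLoad x : ℝ) - (t : ℝ) / (N : ℝ)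

/-- Number of flexed balls `M = ∑_t f_t ω(t)`. -/
noncomputable def numFlexed {N T : ℕ} [NeZero N]
    (dec : (Fin T → Arrival N) → ℕ → (Fin N → ℕ) → Bool) (xs : Fin T → Arrival N) : ℕ :=
  ∑ t : Fin T, if (xs t).1 && dec xs (t : ℕ) (greedyLoads dec xs (t : ℕ)) then 1 else 0

/-- Flexing rule of a "static"-type policy: flex exactly from period
`T - c·√(T log T)` on (ball `t` corresponds to step index `t-1`). -/
noncomputable def lateDec (N T : ℕ) (c : ℝ) :
    (Fin T → Arrival N) → ℕ → (Fin N → ℕ) → Bool :=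
  fun _ s _ =>
    if (T : ℝ) - c * Real.sqrt ((T : ℝ) * Real.log (T : ℝ)) ≤ ((s : ℝ) + 1) then true else false

/-- Flexing rule of the dynamic policy: flex at period `t = s+1` iff the current gap
`Gap(t-1)` is at least `a_d (T - t) q / N` with `a_d = 1/(5 C(N,2))`. -/
noncomputable def dynDec (N T : ℕ) (q : ℝ) :
    (Fin T → Arrival N) → ℕ → (Fin N → ℕ) → Bool :=
  fun _ s x =>
    if (1 / (5 * (N.choose 2 : ℝ))) * ((T : ℝ) - ((s : ℝ) + 1)) * q / (N : ℝ) ≤ gap x s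
    then true else false

/-- First time (within horizon `T`) at which the maximum load equals `S`. -/
noncomputable def hitTime {N : ℕ} (T S : ℕ) (x : ℕ → Fin N → ℕ) : ℕ :=
  if h : ((Finset.range (T + 1)).filter fun t => maxLoad (x t) = S).Nonempty
  then ((Finset.range (T + 1)).filter fun t => maxLoad (x t) = S).min' h
  else T

/-- The dynamic opaque policy: the flag records whether the trigger condition
`Gap(t) ≥ c_d (T-t) q / N` (with `c_d = 1/(10 C(N,2))`) has held at some time `≤ t`;
from then on every flex ball is flexed (greedy placement). Returns (flag, loads). -/
noncomputable def dynOpaque (N T : ℕ) [NeZero N] (q : ℝ) (xs : Fin T → Arrival N) :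
    ℕ → Bool × (Fin N → ℕ)
  | 0 =>
    (if (1 / (10 * (N.choose 2 : ℝ))) * (T : ℝ) * q / (N : ℝ) ≤ 0 then true else false,
      fun _ => 0)
  | t + 1 =>
    let p := dynOpaque N T q xs t
    let x' := if h : t < T then greedyStep p.1 (xs ⟨t, h⟩) p.2 else p.2
    (p.1 ||
      (if (1 / (10 * (N.choose 2 : ℝ))) * ((T : ℝ) - ((t : ℝ) + 1)) * q / (N : ℝ) ≤
          gap x' (t + 1)
       then true else false),
     x')

/-- Number of flexed balls `D = ∑_{t=1}^{R} f_t ω(t)` during one replenishment cycle,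
for a policy given by the flexing rule `dec`. -/
noncomputable def cycleFlexCount (N T : ℕ) [NeZero N]
    (dec : (Fin T → Arrival N) → ℕ → (Fin N → ℕ) → Bool) (S : ℕ)
    (xs : Fin T → Arrival N) : ℕ :=
  ∑ t ∈ Finset.range (hitTime T S (greedyLoads dec xs)),
    if h : t < T then (if (xs ⟨t, h⟩).1 && dec xs t (greedyLoads dec xs t) then 1 else 0)
    else 0

/-- Number of flexed balls during one replenishment cycle of the dynamic opaque policy. -/
noncomputable def dynFlexCount (N T : ℕ) [NeZero N] (q : ℝ) (S : ℕ)
    (xs : Fin T → Arrival N) : ℕ :=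
  ∑ t ∈ Finset.range (hitTime T S fun u => (dynOpaque N T q xs u).2),
    if h : t < T then (if (xs ⟨t, h⟩).1 && (dynOpaque N T q xs t).1 then 1 else 0) else 0

/-! ### The least-loaded bin of a flex set -/

theorem argminBin_spec {N : ℕ} [NeZero N] (x : Fin N → ℕ) (F : Finset (Fin N))
    (hF : F.Nonempty) : argminBin x F ∈ F ∧ ∀ k ∈ F, x (argminBin x F) ≤ x k := by
  obtain ⟨m, hm, hmin⟩ := F.exists_min_image x hF
  have hne : (F.filter fun i => ∀ j ∈ F, x i ≤ x j).Nonempty :=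
    ⟨m, Finset.mem_filter.2 ⟨hm, hmin⟩⟩
  have h := Finset.mem_filter.1 (Finset.min'_mem _ hne)
  unfold argminBin
  rw [dif_pos hne]
  exact h

theorem argminBin_eq_of_lt {N : ℕ} [NeZero N] (x : Fin N → ℕ) (F : Finset (Fin N))
    (j : Fin N) (hj : j ∈ F) (h : ∀ k ∈ F, k ≠ j → x j < x k) : argminBin x F = j := by
  obtain ⟨h1, h2⟩ := argminBin_spec x F ⟨j, hj⟩
  by_contra hne
  exact absurd (h2 j hj) (not_le.2 (h _ h1 hne))

/-- If bin `j` is strictly less loaded than bin `i`, then at least one more flex set sends its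
ball to `j` than to `i`: exchanging `i` and `j` maps the flex sets that feed `i` injectively to
flex sets that feed `j`, and `{i, j}` itself feeds `j` without being in the image. -/
theorem card_argmin_lt {N : ℕ} [NeZero N] (x : Fin N → ℕ) (i j : Fin N) (h : x j < x i) :
    ((Finset.powersetCard 2 Finset.univ).filter fun F => argminBin x F = i).card + 1 ≤
      ((Finset.powersetCard 2 Finset.univ).filter fun F => argminBin x F = j).card := by
  have hij : i ≠ j := by rintro rfl; exact lt_irrefl _ h
  have hpair : argminBin x {i, j} = j := by
    apply argminBin_eq_of_lt
    · simp
    · intro k hk hkj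
      rcases Finset.mem_insert.1 hk with rfl | hk
      · exact h
      · exact absurd (Finset.mem_singleton.1 hk) hkj
  have hmem : ({i, j} : Finset (Fin N)) ∈
      (Finset.powersetCard 2 Finset.univ).filter fun F => argminBin x F = j := by
    rw [Finset.mem_filter, Finset.mem_powersetCard]
    exact ⟨⟨Finset.subset_univ _, Finset.card_pair hij⟩, hpair⟩
  rw [← Finset.card_erase_add_one hmem]
  apply Nat.succ_le_succ
  apply Finset.card_le_card_of_injOn (fun F => F.map (Equiv.swap i j).toEmbedding)
  · intro F hF
    have hF' := Finset.mem_filter.1 (Finset.mem_coe.1 hF)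
    have hcard := (Finset.mem_powersetCard.1 hF'.1).2
    have hFne : F.Nonempty := Finset.card_pos.1 (by omega)
    obtain ⟨h1, h2⟩ := argminBin_spec x F hFne
    rw [hF'.2] at h1 h2
    have hjF : j ∉ F := fun hj => absurd (h2 j hj) (not_le.2 h)
    have hiF : i ∉ F.map (Equiv.swap i j).toEmbedding := by
      intro hi
      obtain ⟨k, hk, hki⟩ := Finset.mem_map.1 hi
      have : k = j := by
        have := congrArg (Equiv.swap i j) hki
        simpa using this
      exact hjF (this ▸ hk)
    apply Finset.mem_coe.2
    rw [Finset.mem_erase, Finset.mem_filter, Finset.mem_powersetCard]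
    refine ⟨?_, ⟨Finset.subset_univ _, by simpa using hcard⟩, ?_⟩
    · intro he
      apply hiF
      have he' : F.map (Equiv.swap i j).toEmbedding = {i, j} := he
      rw [he']
      simp
    · apply argminBin_eq_of_lt
      · exact Finset.mem_map.2 ⟨i, h1, by simp⟩
      · intro k hk hkj
        obtain ⟨l, hl, rfl⟩ := Finset.mem_map.1 hk
        have hlj : l ≠ j := by rintro rfl; exact hjF hl
        have hli : l ≠ i := by rintro rfl; simp at hkj
        have hs : Equiv.swap i j l = l := Equiv.swap_apply_of_ne_of_ne hli hlj
        have := h2 l hl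
        simp only [Equiv.coe_toEmbedding, hs]
        omega
  · intro F _ G _ hFG
    exact Finset.map_injective _ hFG

/-! ### The law of one arrival -/

theorem arrival_sum (N : ℕ) (q : ℝ) (g : Arrival N → ℝ) :
    ∑ a, arrivalProb N q a * g a =
      ∑ p : Fin N, ∑ F ∈ Finset.powersetCard 2 (Finset.univ : Finset (Fin N)),
        1 / (N : ℝ) * (1 / (N.choose 2 : ℝ)) *
          (q * g (true, p, F) + (1 - q) * g (false, p, F)) := by
  have hfil : Finset.powersetCard 2 (Finset.univ : Finset (Fin N)) =
      Finset.univ.filter fun F => F.card = 2 := by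
    ext F
    simp [Finset.mem_powersetCard]
  rw [Fintype.sum_prod_type, Fintype.sum_bool, Fintype.sum_prod_type, Fintype.sum_prod_type,
    ← Finset.sum_add_distrib]
  refine Finset.sum_congr rfl fun p _ => ?_
  rw [← Finset.sum_add_distrib, hfil, Finset.sum_filter]
  refine Finset.sum_congr rfl fun F _ => ?_
  unfold arrivalProb
  by_cases hF : F.card = 2
  · simp only [hF, if_true]
    simp
    ring
  · simp [hF]

theorem arrivalProb_nonneg (N : ℕ) (q : ℝ) (hq0 : 0 < q) (hq1 : q ≤ 1) (a : Arrival N) :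
    0 ≤ arrivalProb N q a := by
  unfold arrivalProb
  have : 0 ≤ 1 - q := by linarith
  refine mul_nonneg (mul_nonneg ?_ (by positivity)) ?_
  · split_ifs <;> linarith
  · split_ifs <;> positivity

theorem arrivalProb_sum (N : ℕ) (hN : 2 ≤ N) (q : ℝ) : ∑ a, arrivalProb N q a = 1 := by
  have h := arrival_sum N q (fun _ => 1)
  simp only [mul_one] at h
  rw [h]
  have hC : (N.choose 2 : ℝ) ≠ 0 := by
    have := Nat.choose_pos hN
    positivity
  have hN0 : (N : ℝ) ≠ 0 := by positivity
  simp [Finset.card_powersetCard]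
  field_simp

theorem seqMass_nonneg (N T : ℕ) (q : ℝ) (hq0 : 0 < q) (hq1 : q ≤ 1)
    (xs : Fin T → Arrival N) : 0 ≤ seqMass N T q xs :=
  Finset.prod_nonneg fun _ _ => arrivalProb_nonneg N q hq0 hq1 _

/-- The change of `x_i - x_j` caused by a ball of type `a` that is flexed whenever possible. -/
noncomputable def diffStep {N : ℕ} [NeZero N] (x : Fin N → ℕ) (i j : Fin N)
    (a : Arrival N) : ℝ :=
  (if (if a.1 then argminBin x a.2.2 else a.2.1) = i then 1 else 0) -
    (if (if a.1 then argminBin x a.2.2 else a.2.1) = j then 1 else 0)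

theorem greedyStep_diff {N : ℕ} [NeZero N] (x : Fin N → ℕ) (i j : Fin N) (a : Arrival N) :
    (greedyStep true a x i : ℝ) - (greedyStep true a x j : ℝ) =
      ((x i : ℝ) - (x j : ℝ)) + diffStep x i j a := by
  have key : ∀ k, (greedyStep true a x k : ℝ) =
      x k + (if (if a.1 then argminBin x a.2.2 else a.2.1) = k then 1 else 0) := by
    intro k
    unfold greedyStep
    simp only [Bool.and_true, eq_comm (a := k)]
    split_ifs <;> simp
  rw [key, key]
  unfold diffStep
  ring

/-- While `x_j < x_i`, the difference `x_i - x_j` has drift at most `-q / C(N,2)`. -/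
theorem drift_le {N : ℕ} [NeZero N] (hN : 2 ≤ N) (q : ℝ) (hq0 : 0 < q)
    (x : Fin N → ℕ) (i j : Fin N) (h : x j < x i) :
    ∑ a, arrivalProb N q a * diffStep x i j a ≤ -(q / (N.choose 2 : ℝ)) := by
  have hC : (0 : ℝ) < (N.choose 2 : ℝ) := by exact_mod_cast Nat.choose_pos hN
  have hN0 : (0 : ℝ) < (N : ℝ) := by positivity
  rw [arrival_sum]
  simp only [diffStep, if_true, Bool.false_eq_true, if_false]
  simp only [← Finset.mul_sum, Finset.sum_add_distrib, Finset.sum_sub_distrib,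
    Finset.sum_const, Finset.card_univ, Fintype.card_fin, Finset.sum_boole]
  have hcard := card_argmin_lt x i j h
  have hcard' : (((Finset.powersetCard 2 Finset.univ).filter
        fun F => argminBin x F = i).card : ℝ) + 1 ≤
      ((Finset.powersetCard 2 Finset.univ).filter fun F => argminBin x F = j).card := by
    exact_mod_cast hcard
  simp only [Finset.card_powersetCard, nsmul_eq_mul]
  generalize (((Finset.powersetCard 2 Finset.univ).filter
        fun F => argminBin x F = i).card : ℝ) = A at *
  generalize (((Finset.powersetCard 2 Finset.univ).filter
        fun F => argminBin x F = j).card : ℝ) = B at *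
  have e : 1 / (N : ℝ) * (1 / (N.choose 2 : ℝ)) * (q * (N * A - N * B)) =
      q / (N.choose 2 : ℝ) * (A - B) := by
    field_simp
  have hp : 0 < q / (N.choose 2 : ℝ) := by positivity
  have : q / (N.choose 2 : ℝ) * (A - B) ≤ q / (N.choose 2 : ℝ) * (-1) :=
    mul_le_mul_of_nonneg_left (by linarith) hp.le
  have hone : ∀ k : Fin N,
      ∑ p : Fin N, ((Finset.univ : Finset (Fin N)).card.choose 2 : ℝ) * (if p = k then 1 else 0) =
        ((Finset.univ : Finset (Fin N)).card.choose 2 : ℝ) := by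
    intro k
    simp
  rw [hone i, hone j, sub_self, mul_zero, add_zero]
  linarith

theorem exp_le_quadratic (l y : ℝ) (hl0 : 0 ≤ l) (hl1 : l ≤ 1) (hy : |y| ≤ 1) :
    Real.exp (l * y) ≤ 1 + l * y + l ^ 2 := by
  have h1 : |l * y| ≤ 1 := by
    rw [abs_mul, abs_of_nonneg hl0]
    exact mul_le_one₀ hl1 (abs_nonneg _) hy
  have h2 := (abs_le.1 (Real.abs_exp_sub_one_sub_id_le h1)).2
  have h3 : (l * y) ^ 2 ≤ l ^ 2 := by
    rw [mul_pow]
    exact mul_le_of_le_one_right (sq_nonneg _) ((sq_le_one_iff_abs_le_one y).2 hy)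
  linarith

/-- One-step exponential supermartingale bound, at the exponent `d / 2` with
`d = q / C(N,2)`, which minimizes `1 - l d + l ^ 2`. -/
theorem one_step_exp {N : ℕ} [NeZero N] (hN : 2 ≤ N) (q : ℝ) (hq0 : 0 < q) (hq1 : q ≤ 1)
    (d : ℝ) (hd : d = q / (N.choose 2 : ℝ)) (x : Fin N → ℕ) (i j : Fin N) (h : x j < x i) :
    ∑ a, arrivalProb N q a *
        Real.exp (d / 2 * ((greedyStep true a x i : ℝ) - (greedyStep true a x j : ℝ))) ≤
      Real.exp (-(d ^ 2 / 4)) * Real.exp (d / 2 * ((x i : ℝ) - (x j : ℝ))) := by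
  have hC : (1 : ℝ) ≤ (N.choose 2 : ℝ) := by exact_mod_cast Nat.choose_pos hN
  have hd0 : 0 < d := by rw [hd]; positivity
  have hd1 : d ≤ 1 := by
    rw [hd]
    exact (div_le_one (by linarith)).2 (by linarith)
  have hdrift := drift_le hN q hq0 x i j h
  rw [← hd] at hdrift
  have hbd : ∀ a, |diffStep x i j a| ≤ 1 := by
    intro a
    unfold diffStep
    split_ifs <;> norm_num
  have hmgf : ∑ a, arrivalProb N q a * Real.exp (d / 2 * diffStep x i j a) ≤
      Real.exp (-(d ^ 2 / 4)) := by
    calc ∑ a, arrivalProb N q a * Real.exp (d / 2 * diffStep x i j a)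
        ≤ ∑ a, arrivalProb N q a * (1 + d / 2 * diffStep x i j a + (d / 2) ^ 2) :=
          Finset.sum_le_sum fun a _ => mul_le_mul_of_nonneg_left
            (exp_le_quadratic _ _ (by linarith) (by linarith) (hbd a))
            (arrivalProb_nonneg N q hq0 hq1 a)
      _ = (1 + (d / 2) ^ 2) * ∑ a, arrivalProb N q a +
            d / 2 * ∑ a, arrivalProb N q a * diffStep x i j a := by
          rw [Finset.mul_sum, Finset.mul_sum, ← Finset.sum_add_distrib]
          exact Finset.sum_congr rfl fun a _ => by ring
      _ ≤ 1 - d ^ 2 / 4 := by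
          rw [arrivalProb_sum N hN]
          nlinarith
      _ ≤ Real.exp (-(d ^ 2 / 4)) := by
          have := Real.add_one_le_exp (-(d ^ 2 / 4))
          linarith
  calc _ = (∑ a, arrivalProb N q a * Real.exp (d / 2 * diffStep x i j a)) *
        Real.exp (d / 2 * ((x i : ℝ) - (x j : ℝ))) := by
        rw [Finset.sum_mul]
        refine Finset.sum_congr rfl fun a _ => ?_
        rw [greedyStep_diff, mul_add, Real.exp_add]
        ring
    _ ≤ _ := mul_le_mul_of_nonneg_right hmgf (Real.exp_pos _).le

/-! ### Integrating out one arrival -/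

/-- Conditioning on all arrivals but the `t`-th: if `H` ignores the `t`-th arrival and bounds the
average of `G` over it, then `H` bounds `G` in expectation. -/
theorem expec_le_of_resample (N T : ℕ) (q : ℝ) (hN : 2 ≤ N) (hq0 : 0 < q) (hq1 : q ≤ 1)
    (t : Fin T) (G H : (Fin T → Arrival N) → ℝ)
    (hH : ∀ xs b, H (Function.update xs t b) = H xs)
    (hGH : ∀ xs, ∑ b, arrivalProb N q b * G (Function.update xs t b) ≤ H xs) :
    expec N T q G ≤ expec N T q H := by
  obtain _ | n := T
  · exact t.elim0
  have split : ∀ K : (Fin (n + 1) → Arrival N) → ℝ, expec N (n + 1) q K =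
      ∑ r : Fin n → Arrival N, (∏ s, arrivalProb N q (r s)) *
        ∑ b, arrivalProb N q b * K (t.insertNth b r) := by
    intro K
    unfold expec seqMass
    rw [← (Fin.insertNthEquiv (fun _ => Arrival N) t).sum_comp, Fintype.sum_prod_type,
      Finset.sum_comm]
    refine Finset.sum_congr rfl fun r _ => ?_
    rw [Finset.mul_sum]
    refine Finset.sum_congr rfl fun b _ => ?_
    rw [Fin.prod_univ_succAbove _ t]
    simp only [Fin.insertNthEquiv, Equiv.coe_fn_mk, Fin.insertNth_apply_same,
      Fin.insertNth_apply_succAbove]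
    ring
  rw [split, split]
  refine Finset.sum_le_sum fun r _ => mul_le_mul_of_nonneg_left ?_
    (Finset.prod_nonneg fun _ _ => arrivalProb_nonneg N q hq0 hq1 _)
  let b₀ : Arrival N := (true, ⟨0, by omega⟩, ∅)
  have h := hGH (t.insertNth b₀ r)
  have hHc : ∀ b, H (t.insertNth b r) = H (t.insertNth b₀ r) := by
    intro b
    have := hH (t.insertNth b₀ r) b
    rwa [Fin.update_insertNth] at this
  simp only [hHc, Fin.update_insertNth] at h ⊢
  rwa [← Finset.sum_mul, arrivalProb_sum N hN, one_mul]

theorem expec_mono (N T : ℕ) (q : ℝ) (hq0 : 0 < q) (hq1 : q ≤ 1)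
    (G H : (Fin T → Arrival N) → ℝ) (h : ∀ xs, G xs ≤ H xs) :
    expec N T q G ≤ expec N T q H :=
  Finset.sum_le_sum fun _ _ =>
    mul_le_mul_of_nonneg_left (h _) (seqMass_nonneg N T q hq0 hq1 _)

theorem expec_const_mul (N T : ℕ) (q c : ℝ) (G : (Fin T → Arrival N) → ℝ) :
    expec N T q (fun xs => c * G xs) = c * expec N T q G := by
  unfold expec
  rw [Finset.mul_sum]
  exact Finset.sum_congr rfl fun _ _ => by ring

theorem prob_eq_expec (N T : ℕ) (q : ℝ) (A : (Fin T → Arrival N) → Prop) :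
    prob N T q A = expec N T q (fun xs => if A xs then 1 else 0) := by
  unfold prob expec
  exact Finset.sum_congr rfl fun xs _ => by by_cases h : A xs <;> simp [h]

/-! ### The load process -/

/-- Under a predictable flexing rule the loads at time `t` depend on the first `t` arrivals. -/
theorem greedyLoads_congr {N T : ℕ} [NeZero N]
    (dec : (Fin T → Arrival N) → ℕ → (Fin N → ℕ) → Bool)
    (hdec : ∀ s, s < T → ∀ (xs ys : Fin T → Arrival N) (x : Fin N → ℕ),
      (∀ u : Fin T, (u : ℕ) < s → xs u = ys u) → dec xs s x = dec ys s x)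
    (xs ys : Fin T → Arrival N) (t : ℕ) (h : ∀ u : Fin T, (u : ℕ) < t → xs u = ys u) :
    greedyLoads dec xs t = greedyLoads dec ys t := by
  induction t with
  | zero => rfl
  | succ t ih =>
    have hlt : ∀ u : Fin T, (u : ℕ) < t → xs u = ys u := fun u hu => h u (by omega)
    have ih := ih hlt
    simp only [greedyLoads, ih]
    split_ifs with ht
    · rw [hdec t ht xs ys _ hlt, h ⟨t, ht⟩ (Nat.lt_succ_self t)]
    · rfl

theorem greedyLoads_succ_le {N T : ℕ} [NeZero N]
    (dec : (Fin T → Arrival N) → ℕ → (Fin N → ℕ) → Bool) (xs : Fin T → Arrival N)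
    (t : ℕ) (k : Fin N) :
    greedyLoads dec xs t k ≤ greedyLoads dec xs (t + 1) k ∧
      greedyLoads dec xs (t + 1) k ≤ greedyLoads dec xs t k + 1 := by
  simp only [greedyLoads]
  split_ifs with h
  · unfold greedyStep
    split_ifs <;> omega
  · omega

theorem greedyLoads_succ_inc {N T : ℕ} [NeZero N]
    (dec : (Fin T → Arrival N) → ℕ → (Fin N → ℕ) → Bool) (xs : Fin T → Arrival N)
    (t : ℕ) (i j : Fin N) (hij : i ≠ j)
    (hi : greedyLoads dec xs t i < greedyLoads dec xs (t + 1) i) :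
    greedyLoads dec xs (t + 1) j = greedyLoads dec xs t j := by
  revert hi
  simp only [greedyLoads]
  split_ifs with h
  · unfold greedyStep
    generalize (if ((xs ⟨t, h⟩).1 && dec xs t (greedyLoads dec xs t)) = true
      then argminBin (greedyLoads dec xs t) (xs ⟨t, h⟩).2.2 else (xs ⟨t, h⟩).2.1) = k
    by_cases h1 : i = k
    · have h2 : j ≠ k := fun h2 => hij (h1.trans h2.symm)
      simp [h2]
    · simp [h1]
  · simp

/-- Discrete intermediate value property: two loads that never coincide on `[t₁, t₂]` keep the
order they have at time `t₂`, because their difference moves by at most one per step. -/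
theorem ordered_of_ne {N T : ℕ} [NeZero N]
    (dec : (Fin T → Arrival N) → ℕ → (Fin N → ℕ) → Bool) (xs : Fin T → Arrival N)
    (t₁ t₂ : ℕ) (i j : Fin N) (hij : i ≠ j)
    (hend : greedyLoads dec xs t₂ j ≤ greedyLoads dec xs t₂ i)
    (hne : ∀ t, t₁ ≤ t → t ≤ t₂ → greedyLoads dec xs t i ≠ greedyLoads dec xs t j)
    (t : ℕ) (h1 : t₁ ≤ t) (h2 : t ≤ t₂) :
    greedyLoads dec xs t j < greedyLoads dec xs t i := by
  induction h2 using Nat.decreasingInduction with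
  | self =>
    have := hne t₂ h1 le_rfl
    omega
  | of_succ k hk ih =>
    have ih := ih (by omega)
    have h3 := hne k h1 hk.le
    have h4 := greedyLoads_succ_le dec xs k i
    have h5 := greedyLoads_succ_le dec xs k j
    have h6 := greedyLoads_succ_inc dec xs k i j hij
    by_cases h7 : greedyLoads dec xs k i < greedyLoads dec xs (k + 1) i
    · have := h6 h7
      omega
    · omega

/-- The weight `exp (l (x_i(t) - x_j(t)))`, restricted to the event that the initial condition
`x_i(t₁) - x_j(t₁) ≤ K` holds and `x_j < x_i` at all times from `t₁` to `t`. -/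
noncomputable def orderedWeight {N T : ℕ} [NeZero N]
    (dec : (Fin T → Arrival N) → ℕ → (Fin N → ℕ) → Bool) (t₁ : ℕ) (i j : Fin N) (K l : ℝ)
    (t : ℕ) (xs : Fin T → Arrival N) : ℝ :=
  if ((greedyLoads dec xs t₁ i : ℝ) - (greedyLoads dec xs t₁ j : ℝ) ≤ K) ∧
      ∀ s, t₁ ≤ s → s ≤ t → greedyLoads dec xs s j < greedyLoads dec xs s i then
    Real.exp (l * ((greedyLoads dec xs t i : ℝ) - (greedyLoads dec xs t j : ℝ)))
  else 0

theorem orderedWeight_congr {N T : ℕ} [NeZero N]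
    (dec : (Fin T → Arrival N) → ℕ → (Fin N → ℕ) → Bool)
    (hdec : ∀ s, s < T → ∀ (xs ys : Fin T → Arrival N) (x : Fin N → ℕ),
      (∀ u : Fin T, (u : ℕ) < s → xs u = ys u) → dec xs s x = dec ys s x)
    (t₁ : ℕ) (i j : Fin N) (K l : ℝ) (t : ℕ) (ht : t₁ ≤ t) (xs ys : Fin T → Arrival N)
    (h : ∀ u : Fin T, (u : ℕ) < t → xs u = ys u) :
    orderedWeight dec t₁ i j K l t xs = orderedWeight dec t₁ i j K l t ys := by
  have hl : ∀ s, s ≤ t → greedyLoads dec xs s = greedyLoads dec ys s := fun s hs =>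
    greedyLoads_congr dec hdec xs ys s fun u hu => h u (by omega)
  unfold orderedWeight
  have hiff : (((greedyLoads dec xs t₁ i : ℝ) - (greedyLoads dec xs t₁ j : ℝ) ≤ K) ∧
      ∀ s, t₁ ≤ s → s ≤ t → greedyLoads dec xs s j < greedyLoads dec xs s i) ↔
      (((greedyLoads dec ys t₁ i : ℝ) - (greedyLoads dec ys t₁ j : ℝ) ≤ K) ∧
      ∀ s, t₁ ≤ s → s ≤ t → greedyLoads dec ys s j < greedyLoads dec ys s i) := by
    rw [hl t₁ ht]
    refine and_congr_right fun _ => forall_congr' fun s => forall_congr' fun _ =>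
      forall_congr' fun hs => ?_
    rw [hl s hs]
  simp only [hiff, hl t le_rfl]

/-- In the flexing phase the expected weight contracts by the factor `exp (-d²/4)` per step. -/
theorem orderedWeight_step {N T : ℕ} [NeZero N] (hN : 2 ≤ N) (q : ℝ) (hq0 : 0 < q)
    (hq1 : q ≤ 1) (d : ℝ) (hd : d = q / (N.choose 2 : ℝ))
    (dec : (Fin T → Arrival N) → ℕ → (Fin N → ℕ) → Bool)
    (hdec : ∀ s, s < T → ∀ (xs ys : Fin T → Arrival N) (x : Fin N → ℕ),
      (∀ u : Fin T, (u : ℕ) < s → xs u = ys u) → dec xs s x = dec ys s x)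
    (t₁ : ℕ) (hflex : ∀ s, t₁ ≤ s → s < T → ∀ (xs : Fin T → Arrival N) (x : Fin N → ℕ),
      dec xs s x = true)
    (i j : Fin N) (K : ℝ) (t : ℕ) (ht : t₁ ≤ t) (htT : t < T) :
    expec N T q (orderedWeight dec t₁ i j K (d / 2) (t + 1)) ≤
      Real.exp (-(d ^ 2 / 4)) * expec N T q (orderedWeight dec t₁ i j K (d / 2) t) := by
  rw [← expec_const_mul]
  have hupd : ∀ (xs : Fin T → Arrival N) (b : Arrival N) (u : Fin T), (u : ℕ) < t →
      Function.update xs ⟨t, htT⟩ b u = xs u := by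
    intro xs b u hu
    apply Function.update_of_ne
    rintro rfl
    exact lt_irrefl _ hu
  apply expec_le_of_resample N T q hN hq0 hq1 ⟨t, htT⟩
  · intro xs b
    rw [orderedWeight_congr dec hdec t₁ i j K (d / 2) t ht _ xs (hupd xs b)]
  · intro xs
    have hl : ∀ b s, s ≤ t → greedyLoads dec (Function.update xs ⟨t, htT⟩ b) s =
        greedyLoads dec xs s := fun b s hs =>
      greedyLoads_congr dec hdec _ xs s fun u hu => hupd xs b u (by omega)
    have hsucc : ∀ b, greedyLoads dec (Function.update xs ⟨t, htT⟩ b) (t + 1) =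
        greedyStep true b (greedyLoads dec xs t) := by
      intro b
      rw [greedyLoads, dif_pos htT, hflex t ht htT, hl b t le_rfl, Function.update_self]
    by_cases hA : ((greedyLoads dec xs t₁ i : ℝ) - (greedyLoads dec xs t₁ j : ℝ) ≤ K) ∧
        ∀ s, t₁ ≤ s → s ≤ t → greedyLoads dec xs s j < greedyLoads dec xs s i
    · have hr : orderedWeight dec t₁ i j K (d / 2) t xs = Real.exp (d / 2 *
          ((greedyLoads dec xs t i : ℝ) - (greedyLoads dec xs t j : ℝ))) := if_pos hA
      rw [hr]
      refine le_trans (Finset.sum_le_sum fun b _ => mul_le_mul_of_nonneg_left ?_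
        (arrivalProb_nonneg N q hq0 hq1 b))
        (one_step_exp hN q hq0 hq1 d hd _ i j (hA.2 t ht le_rfl))
      unfold orderedWeight
      rw [hsucc]
      split_ifs
      · exact le_rfl
      · exact (Real.exp_pos _).le
    · have hr : orderedWeight dec t₁ i j K (d / 2) t xs = 0 := if_neg hA
      rw [hr, mul_zero]
      apply le_of_eq
      refine Finset.sum_eq_zero fun b _ => ?_
      have : orderedWeight dec t₁ i j K (d / 2) (t + 1) (Function.update xs ⟨t, htT⟩ b) = 0 := by
        apply if_neg
        rintro ⟨h1, h2⟩
        rw [hl b t₁ ht] at h1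
        refine hA ⟨h1, fun s hs1 hs2 => ?_⟩
        have := h2 s hs1 (by omega)
        rwa [hl b s hs2] at this
      rw [this, mul_zero]

/-- **Lemma 6** (persistent-ordering event is unlikely given a moderate initial
imbalance): under any policy that is predictable up to `t₁` and flexes every flex ball
for `t₁ < t ≤ t₂` (greedy placement), with
`E = {x_i(t₁) - x_j(t₁) ≤ a_p (t₂-t₁) q + a}` and `F_{ij}^1` the persistent-ordering
event, `P(F_{ij}^1 ∩ E) ≤ (4 exp(-α₀(t₂-t₁)) + exp(-α₁(t₂-t₁))) P(E)` whenever
`t₂ - t₁ ≥ t₀`, for constants `α₀, α₁ > 0` and `t₀` depending only on `N, q, a_p, a`. -/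
theorem persistent_ordering_moderate_imbalance (N : ℕ) [NeZero N] (hN : 2 ≤ N)
    (q : ℝ) (hq0 : 0 < q) (hq1 : q ≤ 1)
    (ap a : ℝ) (hap0 : 0 < ap) (hap1 : ap ≤ 1 / (5 * (N.choose 2 : ℝ))) (ha : 0 < a) :
    ∃ α₀ : ℝ, 0 < α₀ ∧ ∃ α₁ : ℝ, 0 < α₁ ∧ ∃ t₀ : ℕ,
      ∀ t₁ t₂ : ℕ, 1 ≤ t₁ → t₁ < t₂ → t₀ ≤ t₂ - t₁ →
      ∀ dec : (Fin t₂ → Arrival N) → ℕ → (Fin N → ℕ) → Bool,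
        (∀ s, s < t₁ → ∀ (xs ys : Fin t₂ → Arrival N) (x : Fin N → ℕ),
          (∀ u : Fin t₂, (u : ℕ) < s → xs u = ys u) → dec xs s x = dec ys s x) →
        (∀ s, t₁ ≤ s → s < t₂ → ∀ (xs : Fin t₂ → Arrival N) (x : Fin N → ℕ),
          dec xs s x = true) →
      ∀ i j : Fin N, i ≠ j →
        prob N t₂ q (fun xs =>
            ((∀ k, greedyLoads dec xs t₂ k ≤ greedyLoads dec xs t₂ i) ∧
              (∀ k, greedyLoads dec xs t₂ j ≤ greedyLoads dec xs t₂ k) ∧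
              (∀ t, t₁ ≤ t → t ≤ t₂ →
                greedyLoads dec xs t i ≠ greedyLoads dec xs t j)) ∧
            ((greedyLoads dec xs t₁ i : ℝ) - (greedyLoads dec xs t₁ j : ℝ) ≤
              ap * ((t₂ : ℝ) - (t₁ : ℝ)) * q + a))
          ≤ (4 * Real.exp (-α₀ * ((t₂ : ℝ) - (t₁ : ℝ))) +
                Real.exp (-α₁ * ((t₂ : ℝ) - (t₁ : ℝ)))) *
              prob N t₂ q (fun xs =>
                (greedyLoads dec xs t₁ i : ℝ) - (greedyLoads dec xs t₁ j : ℝ) ≤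
                  ap * ((t₂ : ℝ) - (t₁ : ℝ)) * q + a) := by
  have hC : (1 : ℝ) ≤ (N.choose 2 : ℝ) := by exact_mod_cast Nat.choose_pos hN
  obtain ⟨d, hd⟩ : ∃ d, d = q / (N.choose 2 : ℝ) := ⟨_, rfl⟩
  have hd0 : 0 < d := by rw [hd]; positivity
  have hapq : ap * q ≤ d / 5 := by
    calc ap * q ≤ 1 / (5 * (N.choose 2 : ℝ)) * q := mul_le_mul_of_nonneg_right hap1 hq0.le
      _ = d / 5 := by rw [hd]; field_simp
  -- The exponential bound decays at rate `d²/4 - d²/10`; the slack `d²/20` beyond `d²/10`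
  -- absorbs the constant factor `exp (d a / 2)` once `t₂ - t₁ ≥ 10 a / d`.
  refine ⟨d ^ 2 / 10, by positivity, 1, one_pos, ⌈10 * a / d⌉₊, ?_⟩
  intro t₁ t₂ _ ht12 ht0 dec hpred hflex i j hij
  have hL : 10 * a / d ≤ (t₂ : ℝ) - (t₁ : ℝ) := by
    have h1 := Nat.ceil_le.1 ht0
    rwa [Nat.cast_sub ht12.le] at h1
  obtain ⟨L, hLdef⟩ : ∃ L, L = (t₂ : ℝ) - (t₁ : ℝ) := ⟨_, rfl⟩
  obtain ⟨K, hK⟩ : ∃ K, K = ap * L * q + a := ⟨_, rfl⟩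
  rw [← hLdef] at hL ⊢
  rw [← hK]
  have hL0 : 0 ≤ L := le_trans (by positivity) hL
  have hdec : ∀ s, s < t₂ → ∀ (xs ys : Fin t₂ → Arrival N) (x : Fin N → ℕ),
      (∀ u : Fin t₂, (u : ℕ) < s → xs u = ys u) → dec xs s x = dec ys s x := by
    intro s hs xs ys x h
    by_cases hs1 : s < t₁
    · exact hpred s hs1 xs ys x h
    · rw [hflex s (by omega) hs, hflex s (by omega) hs]
  obtain ⟨P, hP⟩ : ∃ P, P = prob N t₂ q (fun xs =>
      (greedyLoads dec xs t₁ i : ℝ) - (greedyLoads dec xs t₁ j : ℝ) ≤ K) := ⟨_, rfl⟩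
  rw [← hP]
  have hP0 : 0 ≤ P := by
    rw [hP]
    refine Finset.sum_nonneg fun xs _ => ?_
    split_ifs
    · exact seqMass_nonneg N t₂ q hq0 hq1 xs
    · exact le_rfl
  have hstart : expec N t₂ q (orderedWeight dec t₁ i j K (d / 2) t₁) ≤
      Real.exp (d / 2 * K) * P := by
    rw [hP, prob_eq_expec, ← expec_const_mul]
    refine expec_mono N t₂ q hq0 hq1 _ _ fun xs => ?_
    unfold orderedWeight
    split_ifs with h1 h2 h2
    · rw [mul_one]
      exact Real.exp_le_exp.2 (mul_le_mul_of_nonneg_left h1.1 (by positivity))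
    · exact absurd h1.1 h2
    · rw [mul_one]
      exact (Real.exp_pos _).le
    · rw [mul_zero]
  have hiter : ∀ n, t₁ + n ≤ t₂ →
      expec N t₂ q (orderedWeight dec t₁ i j K (d / 2) (t₁ + n)) ≤
        Real.exp (-(d ^ 2 / 4)) ^ n * (Real.exp (d / 2 * K) * P) := by
    intro n
    induction n with
    | zero => intro _; simpa using hstart
    | succ n ih =>
      intro hn
      have h1 := orderedWeight_step hN q hq0 hq1 d hd dec hdec t₁ hflex i j K (t₁ + n)
        (by omega) (by omega)
      refine h1.trans ?_
      rw [pow_succ' (Real.exp _), mul_assoc]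
      exact mul_le_mul_of_nonneg_left (ih (by omega)) (Real.exp_pos _).le
  have hfinal : expec N t₂ q (orderedWeight dec t₁ i j K (d / 2) t₂) ≤
      Real.exp (-(d ^ 2 / 10) * L) * P := by
    have h1 := hiter (t₂ - t₁) (by omega)
    rw [Nat.add_sub_cancel' ht12.le, ← Real.exp_nat_mul, Nat.cast_sub ht12.le, ← hLdef,
      ← mul_assoc, ← Real.exp_add] at h1
    refine h1.trans (mul_le_mul_of_nonneg_right (Real.exp_le_exp.2 ?_) hP0)
    have h2 : 10 * a ≤ L * d := (div_le_iff₀ hd0).1 hL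
    have h3 : ap * L * q ≤ d / 5 * L := by
      have := mul_le_mul_of_nonneg_right hapq hL0
      linarith
    have h4 : d / 2 * K ≤ d / 2 * (d / 5 * L + L * d / 10) :=
      mul_le_mul_of_nonneg_left (by linarith) (by positivity)
    linarith
  calc _ ≤ expec N t₂ q (orderedWeight dec t₁ i j K (d / 2) t₂) := by
        rw [prob_eq_expec]
        refine expec_mono N t₂ q hq0 hq1 _ _ fun xs => ?_
        unfold orderedWeight
        split_ifs with h1 h2 h2
        · refine Real.one_le_exp (mul_nonneg (by positivity) (sub_nonneg.2 ?_))
          exact_mod_cast (h2.2 t₂ ht12.le le_rfl).le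
        · exact absurd ⟨h1.2, ordered_of_ne dec xs t₁ t₂ i j hij (h1.1.1 j) h1.1.2.2⟩ h2
        · exact (Real.exp_pos _).le
        · exact le_rfl
    _ ≤ Real.exp (-(d ^ 2 / 10) * L) * P := hfinal
    _ ≤ _ := by
        refine mul_le_mul_of_nonneg_right ?_ hP0
        have h1 := Real.exp_pos (-(d ^ 2 / 10) * L)
        have h2 := Real.exp_pos (-1 * L)
        linarith
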